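/- Let N ≥ 2, 1 < q ≤ 1* := N/(N-1), α > 0, a, b > 0. Then the supremum D̃_α := sup { ‖u‖_1 + α ‖u‖_q^q : u ∈ W^{1,1}(ℝ^N), ‖∇u‖_1^a + ‖u‖_1^b = 1 } is never attained in W^{1,1}(ℝ^N). -/

import Mathlib

open MeasureTheory Real Filter Topology

noncomputable section

abbrev Euc (N : ℕ) := EuclideanSpace ℝ (Fin N)

/-- The set of values `∫ u div ψ` over admissible test vector fields. -/
def TVSet (N : ℕ) (u : Euc N → ℝ) : Set ℝ :=
  { r | ∃ ψ : Euc N → Euc N, ContDiff ℝ 1 ψ ∧ HasCompactSupport ψ ∧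
      (∀ x, ‖ψ x‖ ≤ 1) ∧
      r = ∫ x, u x * (∑ i, fderiv ℝ (fun y => ψ y i) x (EuclideanSpace.single i 1)) }

/-- Total variation of `u`. -/
def tv (N : ℕ) (u : Euc N → ℝ) : ℝ := sSup (TVSet N u)

/-- `u` is a function of bounded variation on `ℝ^N`. -/
def MemBV (N : ℕ) (u : Euc N → ℝ) : Prop :=
  Integrable u ∧ BddAbove (TVSet N u)

/-- The `L¹` norm. -/
def nrm1 (N : ℕ) (u : Euc N → ℝ) : ℝ := (eLpNorm u 1 volume).toReal

/-- The `L^q` norm, `q` a real exponent. -/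
def nrmq (N : ℕ) (q : ℝ) (u : Euc N → ℝ) : ℝ :=
  (eLpNorm u (ENNReal.ofReal q) volume).toReal

/-- Surface area `ω_{N-1}` of the unit sphere in `ℝ^N`, as `N` times the
volume of the unit ball. -/
def omegaS (N : ℕ) : ℝ := N * (volume (Metric.ball (0 : Euc N) 1)).toReal

/-- The Gagliardo–Nirenberg ratio `‖u‖_q^q / (‖u‖_1^{q-(q-1)N} ‖u‖_{TV}^{(q-1)N})`. -/
def ratioQ (N : ℕ) (q : ℝ) (u : Euc N → ℝ) : ℝ :=
  nrmq N q u ^ q / (nrm1 N u ^ (q - (q-1)*N) * tv N u ^ ((q-1)*(N:ℝ)))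

/-- The best constant `E_q` on `BV(ℝ^N)`. -/
def EqSup (N : ℕ) (q : ℝ) : ℝ :=
  sSup { r | ∃ u : Euc N → ℝ, MemBV N u ∧ u ≠ 0 ∧ r = ratioQ N q u }

/-- `u ∈ W^{1,1}(ℝ^N)` with weak gradient `v`. -/
def MemW11 (N : ℕ) (u : Euc N → ℝ) (v : Euc N → Euc N) : Prop :=
  Integrable u ∧ Integrable v ∧
    ∀ ψ : Euc N → ℝ, ContDiff ℝ 1 ψ → HasCompactSupport ψ → ∀ i : Fin N,
      ∫ x, u x * fderiv ℝ ψ x (EuclideanSpace.single i 1) = - ∫ x, v x i * ψ x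

/-- The Gagliardo–Nirenberg ratio on `W^{1,1}`, with `‖∇u‖_1` in place of `‖u‖_{TV}`. -/
def ratioQW (N : ℕ) (q : ℝ) (u : Euc N → ℝ) (v : Euc N → Euc N) : ℝ :=
  nrmq N q u ^ q /
    (nrm1 N u ^ (q - (q-1)*N) * ((eLpNorm v 1 volume).toReal) ^ ((q-1)*(N:ℝ)))

/-- The best constant `Ẽ_q` on `W^{1,1}(ℝ^N)`. -/
def EqSupW (N : ℕ) (q : ℝ) : ℝ :=
  sSup { r | ∃ u : Euc N → ℝ, ∃ v : Euc N → Euc N,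
      MemW11 N u v ∧ u ≠ 0 ∧ r = ratioQW N q u v }

/-- The mollifying bumps. -/
def moll (N : ℕ) (n : ℕ) : ContDiffBump (0 : Euc N) where
  rIn := 1 / ((n : ℝ) + 1)
  rOut := 2 / ((n : ℝ) + 1)
  rIn_pos := by positivity
  rIn_lt_rOut := by
    apply div_lt_div_of_pos_right _ (by positivity)
    norm_num

lemma moll_rOut (N : ℕ) : Tendsto (fun n => (moll N n).rOut) atTop (𝓝 0) := by
  have h := (tendsto_one_div_add_atTop_nhds_zero_nat (𝕜 := ℝ)).const_mul 2
  simp only [mul_zero] at h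
  refine h.congr (fun n => ?_)
  simp [moll, div_eq_mul_inv]

/-- mollification -/
def mo (N : ℕ) (n : ℕ) (g : Euc N → ℝ) : Euc N → ℝ :=
  convolution ((moll N n).normed volume) g (ContinuousLinearMap.lsmul ℝ ℝ) volume

lemma mo_ae (N : ℕ) {g : Euc N → ℝ} (hg : Integrable g) :
    ∀ᵐ x, Tendsto (fun n => mo N n g x) atTop (𝓝 (g x)) := by
  refine ContDiffBump.ae_convolution_tendsto_right_of_locallyIntegrable (K := 2)
    (moll_rOut N) (Eventually.of_forall fun n => ?_) hg.locallyIntegrable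
  simp [moll, div_eq_mul_inv]

lemma mo_integrable (N n : ℕ) {g : Euc N → ℝ} (hg : Integrable g) : Integrable (mo N n g) :=
  Integrable.integrable_convolution _ (moll N n).integrable_normed hg

lemma mo_contDiff (N n : ℕ) {g : Euc N → ℝ} (hg : Integrable g) : ContDiff ℝ 1 (mo N n g) := by
  have := HasCompactSupport.contDiff_convolution_left (ContinuousLinearMap.lsmul ℝ ℝ) (n := 1)
    (f := (moll N n).normed (volume : Measure (Euc N)))
    (moll N n).hasCompactSupport_normed (moll N n).contDiff_normed
    (hg.locallyIntegrable (μ := volume))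
  exact_mod_cast this

lemma mo_fderiv (N n : ℕ) {u : Euc N → ℝ} {v : Euc N → Euc N} (h : MemW11 N u v) (x : Euc N)
    (i : Fin N) :
    fderiv ℝ (mo N n u) x (EuclideanSpace.single i 1) = mo N n (fun y => v y i) x := by
  obtain ⟨hu, hv, hw⟩ := h
  have hs : ContDiff ℝ 1 ((moll N n).normed (volume : Measure (Euc N))) := (moll N n).contDiff_normed
  have hc := (moll N n).hasCompactSupport_normed (μ := (volume : Measure (Euc N)))
  have h1 := (HasCompactSupport.hasFDerivAt_convolution_left (ContinuousLinearMap.lsmul ℝ ℝ)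
    hc hs (hu.locallyIntegrable (μ := volume)) x).fderiv
  unfold mo
  rw [h1]
  have hψ : ContDiff ℝ 1 (fun y => (moll N n).normed volume (x - y)) :=
    hs.comp (contDiff_const.sub contDiff_id)
  have hψc : HasCompactSupport (fun y => (moll N n).normed volume (x - y)) :=
    hc.comp_homeomorph (Homeomorph.subLeft x)
  have h2 := hw _ hψ hψc i
  have h3 : ∀ y, fderiv ℝ (fun y => (moll N n).normed volume (x - y)) y
      (EuclideanSpace.single i 1) =
      - fderiv ℝ ((moll N n).normed volume) (x - y) (EuclideanSpace.single i 1) := by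
    intro y
    have hd : HasFDerivAt (fun y : Euc N => x - y) (-ContinuousLinearMap.id ℝ (Euc N)) y :=
      (hasFDerivAt_id y).const_sub x
    have := ((hs.differentiable one_ne_zero (x - y)).hasFDerivAt.comp y hd).fderiv
    change fderiv ℝ (((moll N n).normed volume) ∘ (fun y => x - y)) y _ = _
    rw [this]; simp
  simp only [h3, mul_neg, integral_neg, neg_inj] at h2
  rw [convolution_eq_swap, convolution_eq_swap, ContinuousLinearMap.integral_apply]
  · simp only [ContinuousLinearMap.precompL_apply, ContinuousLinearMap.lsmul_apply, smul_eq_mul]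
    simp only [mul_comm] at h2 ⊢
    exact h2
  · have := (hc.fderiv ℝ).convolutionExists_left
      ((ContinuousLinearMap.lsmul ℝ ℝ : ℝ →L[ℝ] ℝ →L[ℝ] ℝ).precompL (Euc N))
      (hs.continuous_fderiv one_ne_zero) (hu.locallyIntegrable (μ := volume)) x
    exact (convolutionExistsAt_iff_integrable_swap).1 this

lemma shift_tendsto (N : ℕ) {g : Euc N → ℝ} (hg : Integrable g) :
    Tendsto (fun y => ∫⁻ x, ‖g (x - y) - g x‖ₑ) (𝓝 0) (𝓝 0) := by
  have hm : MemLp g 1 volume := memLp_one_iff_integrable.2 hg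
  set F := hm.toLp g
  have hc : Continuous (fun y : Euc N => edist (DomAddAct.mk (-y) +ᵥ F) F) := by
    have : Continuous (fun y : Euc N => DomAddAct.mk (-y)) :=
      DomAddAct.continuous_mk.comp continuous_neg
    have hf1 : Fact ((1 : ENNReal) ≠ ⊤) := ⟨by simp⟩
    exact (this.vadd continuous_const).edist continuous_const
  have h0 := hc.tendsto 0
  have e : ∀ y : Euc N, edist (DomAddAct.mk (-y) +ᵥ F) F = ∫⁻ x, ‖g (x - y) - g x‖ₑ := by
    intro y
    rw [Lp.edist_def, eLpNorm_one_eq_lintegral_enorm]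
    apply lintegral_congr_ae
    have h1 := DomAddAct.mk_vadd_toLp (-y) hm
    have h2 := hm.coeFn_toLp
    have h3 := MemLp.coeFn_toLp
      (hm.comp_measurePreserving (measurePreserving_vadd (-y) (volume : Measure (Euc N))))
    change F =ᵐ[_] g at h2
    change DomAddAct.mk (-y) +ᵥ F = _ at h1
    rw [h1]
    filter_upwards [h2, h3] with x hx hx3
    rw [Pi.sub_apply, hx]
    refine congrArg (fun t => ‖t - g x‖ₑ) (hx3.trans ?_)
    simp [neg_add_eq_sub]
  simp only [e] at h0
  simpa using h0

lemma mo_L1 (N : ℕ) {g : Euc N → ℝ} (hg : Integrable g) :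
    Tendsto (fun n => ∫⁻ x, ‖mo N n g x - g x‖ₑ) atTop (𝓝 0) := by
  rw [ENNReal.tendsto_nhds_zero]
  intro ε hε
  have h1 := (ENNReal.tendsto_nhds_zero.1 (shift_tendsto N hg)) ε hε
  obtain ⟨δ, hδ, h1⟩ := Metric.eventually_nhds_iff_ball.1 h1
  filter_upwards [(moll_rOut N).eventually (gt_mem_nhds hδ)] with n hn
  set φ := (moll N n).normed (volume : Measure (Euc N)) with hφ
  have hi : Integrable φ := (moll N n).integrable_normed
  have hφ1 : ∫ y, φ y = 1 := (moll N n).integral_normed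
  have hφ0 : ∀ y, 0 ≤ φ y := (moll N n).nonneg_normed
  have hφm : Measurable φ := (moll N n).continuous_normed.measurable
  have hφ1' : ∫⁻ y, ‖φ y‖ₑ = 1 := by
    rw [← ofReal_integral_norm_eq_lintegral_enorm hi]
    simp [abs_of_nonneg (hφ0 _), hφ1]
  have hgm : AEStronglyMeasurable (fun p : Euc N × Euc N => g (p.1 - p.2) - g p.1)
      (volume.prod volume) := by
    refine AEStronglyMeasurable.sub ?_ ?_
    · exact hg.1.comp_quasiMeasurePreserving (quasiMeasurePreserving_sub_of_right_invariant _ _)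
    · exact hg.1.comp_fst
  have hae : ∀ᵐ x, Integrable (fun t => φ t * g (x - t)) :=
    hi.ae_convolution_exists (ContinuousLinearMap.lsmul ℝ ℝ) hg
  calc ∫⁻ x, ‖mo N n g x - g x‖ₑ ≤ ∫⁻ x, ∫⁻ y, ‖φ y‖ₑ * ‖g (x - y) - g x‖ₑ := by
        apply lintegral_mono_ae
        filter_upwards [hae] with x hx
        have : mo N n g x - g x = ∫ y, φ y * (g (x - y) - g x) := by
          simp only [mul_sub]
          rw [integral_sub hx (hi.mul_const _), integral_mul_const, hφ1, one_mul]
          rfl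
        rw [this]
        refine (enorm_integral_le_lintegral_enorm _).trans (le_of_eq ?_)
        simp [enorm_mul]
    _ = ∫⁻ y, ∫⁻ x, ‖φ y‖ₑ * ‖g (x - y) - g x‖ₑ := by
        apply lintegral_lintegral_swap
        exact (hφm.comp measurable_snd).enorm.aemeasurable.mul hgm.enorm
    _ = ∫⁻ y, ‖φ y‖ₑ * ∫⁻ x, ‖g (x - y) - g x‖ₑ := by
        congr 1; ext y
        rw [lintegral_const_mul' _ _ (by simp)]
    _ ≤ ∫⁻ y, ‖φ y‖ₑ * ε := by
        apply lintegral_mono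
        intro y
        by_cases hy : y ∈ Metric.ball (0 : Euc N) (moll N n).rOut
        · exact mul_le_mul_right (h1 y (Metric.ball_subset_ball hn.le hy)) _
        · have : φ y = 0 := by
            rw [← Function.notMem_support, hφ, ContDiffBump.support_normed_eq]; exact hy
          simp [this]
    _ = ε := by
        rw [lintegral_mul_const _ hφm.enorm, hφ1', one_mul]

lemma zero_grad (N : ℕ) (hN : 2 ≤ N) {u : Euc N → ℝ} {v : Euc N → Euc N} (h : MemW11 N u v)
    (hv : v =ᵐ[volume] 0) : u =ᵐ[volume] 0 := by
  have key : ∀ n, ∀ x, mo N n u x = 0 := by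
    intro n
    have hz : ∀ i x, mo N n (fun y => v y i) x = 0 := by
      intro i x
      unfold mo
      rw [convolution_eq_swap]
      apply integral_eq_zero_of_ae
      filter_upwards [hv] with y hy
      simp [hy]
    have hf : ∀ x, fderiv ℝ (mo N n u) x = 0 := by
      intro x
      have : (fderiv ℝ (mo N n u) x).toLinearMap = 0 := by
        apply (EuclideanSpace.basisFun (Fin N) ℝ).toBasis.ext
        intro i
        simpa using (mo_fderiv N n h x i).trans (hz i x)
      ext y
      exact congrArg (fun L => L y) this
    have hcst := is_const_of_fderiv_eq_zero ((mo_contDiff N n h.1).differentiable one_ne_zero) hf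
    intro x
    have hint := mo_integrable N n h.1
    have : mo N n u = fun _ => mo N n u x := by ext y; exact hcst y x
    rw [this, integrable_const_iff] at hint
    rcases hint with h0 | h0
    · exact h0
    · exfalso
      have : Nonempty (Fin N) := ⟨⟨0, by omega⟩⟩
      have := h0.measure_univ_lt_top
      simp at this
  filter_upwards [mo_ae N h.1] with x hx
  simp only [key] at hx
  exact (tendsto_nhds_unique hx tendsto_const_nhds)

lemma f_bounds {f : ℝ → ℝ} (hf : ContDiff ℝ 1 f) (hfc : HasCompactSupport f) (hf0 : f 0 = 0) :
    ∃ C : ℝ, 0 < C ∧ (∀ t, |f t| ≤ C) ∧ (∀ t, |deriv f t| ≤ C) ∧ ∀ t, |f t| ≤ C * |t| := by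
  obtain ⟨C1, h1⟩ := hfc.exists_bound_of_continuous hf.continuous
  obtain ⟨C2, h2⟩ := hfc.deriv.exists_bound_of_continuous (hf.continuous_deriv le_rfl)
  simp only [Real.norm_eq_abs] at h1 h2
  have hd : ∀ t, |deriv f t| ≤ max 1 (max C1 C2) := fun t =>
    (h2 t).trans ((le_max_right _ _).trans (le_max_right _ _))
  refine ⟨max 1 (max C1 C2), by positivity, fun t => (h1 t).trans
    ((le_max_left _ _).trans (le_max_right _ _)), hd, fun t => ?_⟩
  have := Convex.norm_image_sub_le_of_norm_deriv_le (f := f) (s := Set.univ) (x := 0) (y := t)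
    (fun x _ => (hf.differentiable one_ne_zero).differentiableAt) (fun x _ => hd x) convex_univ
    trivial trivial
  simpa [hf0] using this

lemma MemW11.comp {N : ℕ} {u : Euc N → ℝ} {v : Euc N → Euc N} (h : MemW11 N u v)
    {f : ℝ → ℝ} (hf : ContDiff ℝ 1 f) (hfc : HasCompactSupport f) (hf0 : f 0 = 0) :
    MemW11 N (fun x => f (u x)) (fun x => deriv f (u x) • v x) := by
  obtain ⟨C, hC, hb, hb', hl⟩ := f_bounds hf hfc hf0
  have hu := h.1
  have hv := h.2.1
  have hcd : Continuous (deriv f) := hf.continuous_deriv le_rfl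
  have hum : AEStronglyMeasurable (fun x => deriv f (u x)) volume :=
    hcd.comp_aestronglyMeasurable hu.1
  refine ⟨?_, ?_, ?_⟩
  · refine Integrable.mono' (hu.norm.const_mul C) (hf.continuous.comp_aestronglyMeasurable hu.1) ?_
    exact Eventually.of_forall fun x => hl _
  · exact hv.bdd_smul C hum (Eventually.of_forall fun x => hb' _)
  intro ψ hψ hψc i
  have hvi : Integrable (fun x => v x i) :=
    (EuclideanSpace.proj (𝕜 := ℝ) i).integrable_comp hv
  set e : Euc N := EuclideanSpace.single i 1
  have hψ' : Continuous (fun x => fderiv ℝ ψ x e) :=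
    (hψ.continuous_fderiv one_ne_zero).clm_apply continuous_const
  have hψ'c : HasCompactSupport (fun x => fderiv ℝ ψ x e) := hψc.fderiv_apply ℝ e
  have hψ'i : Integrable (fun x => fderiv ℝ ψ x e) := hψ'.integrable_of_hasCompactSupport hψ'c
  obtain ⟨K, hK⟩ := hψc.exists_bound_of_continuous hψ.continuous
  have hae := mo_ae N hu
  -- first limit
  have lim1 : Tendsto (fun n => ∫ x, f (mo N n u x) * fderiv ℝ ψ x e) atTop
      (𝓝 (∫ x, f (u x) * fderiv ℝ ψ x e)) := by
    refine tendsto_integral_of_dominated_convergence (fun x => C * ‖fderiv ℝ ψ x e‖)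
      (fun n => ?_) (hψ'i.norm.const_mul C) (fun n => Eventually.of_forall fun x => ?_) ?_
    · exact ((hf.continuous.comp (mo_contDiff N n hu).continuous).mul hψ').aestronglyMeasurable
    · rw [norm_mul]
      exact mul_le_mul_of_nonneg_right (hb _) (norm_nonneg _)
    · filter_upwards [hae] with x hx
      exact ((hf.continuous.tendsto _).comp hx).mul_const _
  have ibp : ∀ n, ∫ x, f (mo N n u x) * fderiv ℝ ψ x e =
      - ∫ x, (deriv f (mo N n u x) * mo N n (fun y => v y i) x) * ψ x := by
    intro n
    have hc1 := mo_contDiff N n hu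
    have hcomp : ContDiff ℝ 1 (fun x => f (mo N n u x)) := hf.comp hc1
    have hder : ∀ x, fderiv ℝ (fun x => f (mo N n u x)) x e =
        deriv f (mo N n u x) * mo N n (fun y => v y i) x := by
      intro x
      rw [← mo_fderiv N n h x i]
      have := ((hf.differentiable one_ne_zero (mo N n u x)).hasDerivAt.comp_hasFDerivAt x
        (hc1.differentiable one_ne_zero x).hasFDerivAt).fderiv
      change fderiv ℝ (f ∘ mo N n u) x e = _
      rw [this]; rfl
    have hcf : Continuous (fun x => fderiv ℝ (fun x => f (mo N n u x)) x e) :=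
      (hcomp.continuous_fderiv one_ne_zero).clm_apply continuous_const
    rw [integral_mul_fderiv_eq_neg_fderiv_mul_of_integrable]
    · simp only [hder]
    · exact (hcf.mul hψ.continuous).integrable_of_hasCompactSupport hψc.mul_left
    · exact (hcomp.continuous.mul hψ').integrable_of_hasCompactSupport hψ'c.mul_left
    · exact (hcomp.continuous.mul hψ.continuous).integrable_of_hasCompactSupport hψc.mul_left
    · exact fun x _ => hcomp.differentiable one_ne_zero x
    · exact fun x _ => hψ.differentiable one_ne_zero x
  -- second limit
  have lim2a : Tendsto (fun n => ∫ x, (deriv f (mo N n u x) * v x i) * ψ x) atTop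
      (𝓝 (∫ x, (deriv f (u x) * v x i) * ψ x)) := by
    refine tendsto_integral_of_dominated_convergence (fun x => C * ‖v x i‖ * K)
      (fun n => ?_) ((hvi.norm.const_mul C).mul_const K)
      (fun n => Eventually.of_forall fun x => ?_) ?_
    · exact ((hcd.comp (mo_contDiff N n hu).continuous).aestronglyMeasurable.mul hvi.1).mul
        hψ.continuous.aestronglyMeasurable
    · rw [norm_mul, norm_mul]
      exact mul_le_mul (mul_le_mul_of_nonneg_right (hb' _) (norm_nonneg _)) (hK x)
        (norm_nonneg _) (by positivity)
    · filter_upwards [hae] with x hx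
      exact (((hcd.tendsto _).comp hx).mul_const _).mul_const _
  have hmi : ∀ n, Integrable (mo N n (fun y => v y i)) := fun n => mo_integrable N n hvi
  have hI : ∀ n (w : Euc N → ℝ), Integrable w →
      Integrable (fun x => (deriv f (mo N n u x) * w x) * ψ x) := by
    intro n w hw
    refine Integrable.mul_bdd (c := K) ?_ hψ.continuous.aestronglyMeasurable
      (Eventually.of_forall hK)
    exact hw.bdd_mul (c := C)
      (hcd.comp (mo_contDiff N n hu).continuous).aestronglyMeasurable
      (Eventually.of_forall fun x => hb' _)
  have lim2b : Tendsto (fun n => (∫ x, (deriv f (mo N n u x) * mo N n (fun y => v y i) x) * ψ x)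
      - ∫ x, (deriv f (mo N n u x) * v x i) * ψ x) atTop (𝓝 0) := by
    have hL := (ENNReal.tendsto_toReal ENNReal.zero_ne_top).comp (mo_L1 N hvi)
    have hL' : Tendsto (fun n => C * K * ∫ x, ‖mo N n (fun y => v y i) x - v x i‖) atTop
        (𝓝 0) := by
      have := hL.const_mul (C * K)
      simp only [ENNReal.toReal_zero, mul_zero] at this
      refine this.congr fun n => ?_
      exact congrArg (fun t => C * K * t)
        (integral_norm_eq_lintegral_enorm ((hmi n).sub hvi).1).symm
    refine squeeze_zero_norm (fun n => ?_) hL'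
    rw [← integral_sub (hI n _ (hmi n)) (hI n _ hvi), ← integral_const_mul]
    refine norm_integral_le_of_norm_le ((((hmi n).sub hvi).norm).const_mul _)
      (Eventually.of_forall fun x => ?_)
    have : deriv f (mo N n u x) * mo N n (fun y => v y i) x * ψ x
        - deriv f (mo N n u x) * v x i * ψ x
        = deriv f (mo N n u x) * ψ x * (mo N n (fun y => v y i) x - v x i) := by ring
    rw [this, norm_mul, norm_mul]
    exact mul_le_mul_of_nonneg_right (mul_le_mul (hb' _) (hK x) (norm_nonneg _) hC.le)
      (norm_nonneg _)
  have lim2 := (lim2b.add lim2a).neg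
  simp only [sub_add_cancel, zero_add, ← ibp] at lim2
  have := tendsto_nhds_unique lim1 lim2
  simpa using this

lemma MemW11.add {N : ℕ} {u w : Euc N → ℝ} {v z : Euc N → Euc N} (h : MemW11 N u v)
    (h' : MemW11 N w z) : MemW11 N (fun x => u x + w x) (fun x => v x + z x) := by
  refine ⟨h.1.add h'.1, h.2.1.add h'.2.1, fun ψ hψ hψc i => ?_⟩
  have hψ' : Continuous (fun x => fderiv ℝ ψ x (EuclideanSpace.single i 1)) :=
    (hψ.continuous_fderiv one_ne_zero).clm_apply continuous_const
  have hψ'c : HasCompactSupport (fun x => fderiv ℝ ψ x (EuclideanSpace.single i 1)) :=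
    hψc.fderiv_apply ℝ _
  obtain ⟨K, hK⟩ := hψc.exists_bound_of_continuous hψ.continuous
  obtain ⟨K', hK'⟩ := hψ'c.exists_bound_of_continuous hψ'
  have a1 := fun {g : Euc N → ℝ} (hg : Integrable g) => hg.mul_bdd (c := K')
    hψ'.aestronglyMeasurable (Eventually.of_forall hK')
  have a2 := fun {g : Euc N → ℝ} (hg : Integrable g) => hg.mul_bdd (c := K)
    hψ.continuous.aestronglyMeasurable (Eventually.of_forall hK)
  have hvi : Integrable (fun x => v x i) :=
    (EuclideanSpace.proj (𝕜 := ℝ) i).integrable_comp h.2.1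
  have hzi : Integrable (fun x => z x i) :=
    (EuclideanSpace.proj (𝕜 := ℝ) i).integrable_comp h'.2.1
  have e1 := h.2.2 ψ hψ hψc i
  have e2 := h'.2.2 ψ hψ hψc i
  simp only [add_mul, PiLp.add_apply]
  rw [integral_add (a1 h.1) (a1 h'.1), integral_add (a2 hvi) (a2 hzi), e1, e2]
  ring

/-- `C¹` compactly supported functions are in `W^{1,1}`. -/
lemma memW11_of_contDiff {N : ℕ} {u : Euc N → ℝ} (hu : ContDiff ℝ 1 u)
    (huc : HasCompactSupport u) :
    MemW11 N u (fun x => gradient u x) := by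
  have hgc : Continuous (fun x => gradient u x) := by
    unfold gradient
    exact (InnerProductSpace.toDual ℝ (Euc N)).symm.continuous.comp
      (hu.continuous_fderiv one_ne_zero)
  have hgs : HasCompactSupport (fun x => gradient u x) := by
    unfold gradient
    exact (huc.fderiv ℝ).comp_left (map_zero _)
  refine ⟨hu.continuous.integrable_of_hasCompactSupport huc,
    hgc.integrable_of_hasCompactSupport hgs, fun ψ hψ hψc i => ?_⟩
  have hψ' : Continuous (fun x => fderiv ℝ ψ x (EuclideanSpace.single i 1)) :=
    (hψ.continuous_fderiv one_ne_zero).clm_apply continuous_const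
  have hu' : Continuous (fun x => fderiv ℝ u x (EuclideanSpace.single i 1)) :=
    (hu.continuous_fderiv one_ne_zero).clm_apply continuous_const
  have hg : ∀ x, gradient u x i = fderiv ℝ u x (EuclideanSpace.single i 1) := by
    intro x
    have : inner ℝ (gradient u x) (EuclideanSpace.single i 1) =
      fderiv ℝ u x (EuclideanSpace.single i 1) := by
      unfold gradient; simp
    rw [← this, EuclideanSpace.inner_single_right]
    simp
  simp only [hg]
  rw [integral_mul_fderiv_eq_neg_fderiv_mul_of_integrable]
  · exact (hu'.mul hψ.continuous).integrable_of_hasCompactSupport hψc.mul_left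
  · exact (hu.continuous.mul hψ').integrable_of_hasCompactSupport huc.mul_right
  · exact (hu.continuous.mul hψ.continuous).integrable_of_hasCompactSupport hψc.mul_left
  · exact fun x _ => hu.differentiable one_ne_zero x
  · exact fun x _ => hψ.differentiable one_ne_zero x

lemma nrm1_eq {N : ℕ} {u : Euc N → ℝ} (hu : Integrable u) : nrm1 N u = ∫ x, |u x| := by
  unfold nrm1
  rw [eLpNorm_one_eq_lintegral_enorm, ← integral_norm_eq_lintegral_enorm hu.1]
  rfl

lemma nrmv_eq {N : ℕ} {v : Euc N → Euc N} (hv : Integrable v) :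
    (eLpNorm v 1 volume).toReal = ∫ x, ‖v x‖ := by
  rw [eLpNorm_one_eq_lintegral_enorm, ← integral_norm_eq_lintegral_enorm hv.1]

lemma nrmq_eq {N : ℕ} {q : ℝ} (hq : 1 < q) {u : Euc N → ℝ}
    (hu : MemLp u (ENNReal.ofReal q) volume) : nrmq N q u ^ q = ∫ x, |u x| ^ q := by
  have hq0 : 0 < q := by linarith
  have hnn : 0 ≤ ∫ x, |u x| ^ q :=
    integral_nonneg fun x => Real.rpow_nonneg (abs_nonneg _) _
  unfold nrmq
  rw [hu.eLpNorm_eq_integral_rpow_norm (by simpa using hq0) ENNReal.ofReal_ne_top,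
    ENNReal.toReal_ofReal hq0.le]
  simp only [Real.norm_eq_abs]
  rw [ENNReal.toReal_ofReal (Real.rpow_nonneg hnn _), ← Real.rpow_mul hnn,
    inv_mul_cancel₀ hq0.ne', Real.rpow_one]

lemma rpow_ptwise {q : ℝ} (hq : 1 < q) {x y : ℝ} (h : |y| ≤ |x|) :
    2 * |x| ^ q ≤ |x + y| ^ q + |x - y| ^ q ∧
      (2 * |x| ^ q = |x + y| ^ q + |x - y| ^ q → y = 0) := by
  by_cases hy : y = 0
  · subst hy; simp [two_mul]
  have hx : x ≠ 0 := by
    rintro rfl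
    simp at h; exact hy h
  have hsum : |x + y| + |x - y| = 2 * |x| := by
    rcases abs_cases x with ⟨h1, h2⟩ | ⟨h1, h2⟩ <;> rcases abs_cases y with ⟨h3, h4⟩ | ⟨h3, h4⟩ <;>
    rcases abs_cases (x + y) with ⟨h5, h6⟩ | ⟨h5, h6⟩ <;>
    rcases abs_cases (x - y) with ⟨h7, h8⟩ | ⟨h7, h8⟩ <;> linarith
  have hne : |x + y| ≠ |x - y| := by
    intro h'
    rcases abs_eq_abs.1 h' with h1 | h1
    · apply hy; linarith
    · apply hx; linarith
  have := (strictConvexOn_rpow hq).2 (Set.mem_Ici.2 (abs_nonneg (x + y)))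
    (Set.mem_Ici.2 (abs_nonneg (x - y))) hne (by norm_num : (0 : ℝ) < 1 / 2)
    (by norm_num : (0 : ℝ) < 1 / 2) (by norm_num)
  simp only [smul_eq_mul] at this
  have e : 1 / 2 * |x + y| + 1 / 2 * |x - y| = |x| := by linarith
  rw [e] at this
  constructor
  · linarith
  · intro h'; linarith

lemma int_strict {N : ℕ} {q : ℝ} (hq : 1 < q) {u g : Euc N → ℝ}
    (hu : MemLp u (ENNReal.ofReal q) volume) (hg : AEStronglyMeasurable g volume)
    (hle : ∀ x, |g x| ≤ |u x|) (hne : ¬ g =ᵐ[volume] 0) :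
    2 * ∫ x, |u x| ^ q < (∫ x, |u x + g x| ^ q) + ∫ x, |u x - g x| ^ q := by
  have hq0 : 0 < q := by linarith
  have hgm : MemLp g (ENNReal.ofReal q) volume := hu.mono hg (Eventually.of_forall hle)
  have hi : ∀ {w : Euc N → ℝ}, MemLp w (ENNReal.ofReal q) volume →
      Integrable (fun x => |w x| ^ q) := by
    intro w hw
    have := hw.integrable_norm_rpow (by simpa using hq0) ENNReal.ofReal_ne_top
    simpa [ENNReal.toReal_ofReal hq0.le] using this
  have i1 := hi hu
  have i2 : Integrable (fun x => |u x + g x| ^ q) := hi (hu.add hgm)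
  have i3 : Integrable (fun x => |u x - g x| ^ q) := hi (hu.sub hgm)
  have hnn : 0 ≤ fun x => (|u x + g x| ^ q + |u x - g x| ^ q) - 2 * |u x| ^ q :=
    fun x => sub_nonneg.2 (rpow_ptwise hq (hle x)).1
  have e : ∫ x, ((|u x + g x| ^ q + |u x - g x| ^ q) - 2 * |u x| ^ q) =
      ((∫ x, |u x + g x| ^ q) + ∫ x, |u x - g x| ^ q) - 2 * ∫ x, |u x| ^ q := by
    have i4 : Integrable (fun x => |u x + g x| ^ q + |u x - g x| ^ q) := i2.add i3
    rw [integral_sub i4 (i1.const_mul 2), integral_const_mul, integral_add i2 i3]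
  have h0 := integral_nonneg (μ := volume) hnn
  rcases h0.eq_or_lt with h0 | h0
  · exfalso
    have := (integral_eq_zero_iff_of_nonneg hnn ((i2.add i3).sub (i1.const_mul 2))).1 h0.symm
    apply hne
    filter_upwards [this] with x hx
    exact (rpow_ptwise hq (hle x)).2 (sub_eq_zero.1 hx).symm
  · rw [e] at h0; linarith

lemma sep_finset (P : Finset ℝ) :
    ∃ δ : ℝ, 0 < δ ∧ ∀ x ∈ P, ∀ y ∈ P, x ≠ y → δ ≤ |x - y| := by
  classical
  by_cases h : ((P ×ˢ P).filter (fun p => p.1 ≠ p.2)).Nonempty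
  · obtain ⟨p, hp, hmin⟩ := Finset.exists_min_image _ (fun p : ℝ × ℝ => |p.1 - p.2|) h
    simp only [Finset.mem_filter, Finset.mem_product] at hp hmin
    exact ⟨|p.1 - p.2|, abs_pos.2 (sub_ne_zero.2 hp.2), fun x hx y hy hxy =>
      hmin (x, y) ⟨⟨hx, hy⟩, hxy⟩⟩
  · refine ⟨1, one_pos, fun x hx y hy hxy => ?_⟩
    exact absurd ⟨(x, y), by simp [hx, hy, hxy]⟩ h

/-- small bumps on the real line -/
def rb (δ : ℝ) (hδ : 0 < δ) (p : ℝ) : ContDiffBump p where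
  rIn := δ / 4
  rOut := δ / 2
  rIn_pos := by positivity
  rIn_lt_rOut := by linarith

lemma rb_one {δ : ℝ} (hδ : 0 < δ) {p t : ℝ} (h : |t - p| < δ / 4) : rb δ hδ p t = 1 :=
  ContDiffBump.one_of_mem_closedBall _ (by
    simp only [Metric.mem_closedBall, Real.dist_eq, rb]; exact h.le)

lemma rb_zero {δ : ℝ} (hδ : 0 < δ) {p r t : ℝ} (hr : δ ≤ |r - p|) (h : |t - r| < δ / 4) :
    rb δ hδ p t = 0 :=
  ContDiffBump.zero_of_le_dist _ (by
    simp only [Real.dist_eq, rb]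
    have := abs_sub_le r t p
    rw [abs_sub_comm r t] at this
    linarith)

lemma exists_f {N : ℕ} (hN : 2 ≤ N) {u : Euc N → ℝ} {v : Euc N → Euc N} (h : MemW11 N u v)
    (hu0 : ¬ u =ᵐ[volume] 0) :
    ∃ f : ℝ → ℝ, ContDiff ℝ 1 f ∧ HasCompactSupport f ∧ f 0 = 0 ∧ (∀ t, |deriv f t| ≤ 1) ∧
      (∀ t, |f t| ≤ |t|) ∧
      ∫ x, deriv f (u x) * ‖v x‖ = 0 ∧ ∫ x, SignType.sign (u x) * f (u x) = 0 ∧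
      ¬ (fun x => f (u x)) =ᵐ[volume] 0 := by
  classical
  have hum : AEMeasurable u volume := h.1.1.aemeasurable
  set S : Set ℝ := (Measure.map u volume).support \ {0} with hS
  have hae : ∀ᵐ x, u x = 0 ∨ u x ∈ S := by
    have : ∀ᵐ t ∂(Measure.map u volume), t ∈ (Measure.map u volume).support :=
      Measure.support_mem_ae
    filter_upwards [ae_of_ae_map hum this] with x hx
    by_cases hx0 : u x = 0
    · exact Or.inl hx0
    · exact Or.inr ⟨hx, hx0⟩
  -- positivity of the measure of preimages
  have hpos : ∀ p ∈ S, ∀ r > 0, ∀ F : ℝ → ℝ, (∀ t, |t - p| < r → F t ≠ 0) →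
      ¬ (fun x => F (u x)) =ᵐ[volume] 0 := by
    intro p hp r hr F hF hz
    have h1 := (Measure.mem_support_iff_forall p).1 hp.1 _ (Metric.ball_mem_nhds p hr)
    rw [Measure.map_apply_of_aemeasurable hum Metric.isOpen_ball.measurableSet] at h1
    refine h1.ne' (measure_mono_null ?_ (ae_iff.1 hz))
    intro x hx
    exact hF _ (by simpa [Real.dist_eq] using hx)
  by_cases hfin : S.Finite
  · exfalso
    have hne : S.Nonempty := by
      by_contra hemp
      rw [Set.not_nonempty_iff_eq_empty] at hemp
      apply hu0
      filter_upwards [hae] with x hx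
      simpa [hemp] using hx
    obtain ⟨p, hp⟩ := hne
    obtain ⟨δ, hδ, hsep⟩ := sep_finset (insert 0 hfin.toFinset)
    have hp0 : p ≠ 0 := hp.2
    have hpm : p ∈ insert 0 hfin.toFinset := by simp [hp]
    have hB0 : rb δ hδ p 0 = 0 :=
      rb_zero hδ (r := 0) (hsep 0 (by simp) p hpm hp0.symm) (by simpa using hδ)
    have hW := h.comp (f := rb δ hδ p) (ContDiffBump.contDiff _)
      (ContDiffBump.hasCompactSupport _) hB0
    have hder : ∀ r ∈ insert 0 hfin.toFinset, deriv (rb δ hδ p) r = 0 := by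
      intro r hr
      have hev : ∀ᶠ t in 𝓝 r, |t - r| < δ / 4 :=
        Metric.ball_mem_nhds r (by positivity : 0 < δ / 4)
      by_cases hrp : r = p
      · subst hrp
        have : (rb δ hδ r : ℝ → ℝ) =ᶠ[𝓝 r] fun _ => 1 := hev.mono fun t ht => rb_one hδ ht
        rw [this.deriv_eq]; simp
      · have : (rb δ hδ p : ℝ → ℝ) =ᶠ[𝓝 r] fun _ => 0 :=
          hev.mono fun t ht => rb_zero hδ (hsep r hr p hpm hrp) ht
        rw [this.deriv_eq]; simp
    have hz := zero_grad N hN hW (by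
      filter_upwards [hae] with x hx
      have : u x ∈ insert 0 hfin.toFinset := by simpa using hx
      simp [hder _ this])
    exact hpos p hp (δ / 4) (by positivity) (rb δ hδ p) (fun t ht => by simp [rb_one hδ ht]) hz
  · obtain ⟨P, hPS, hPc⟩ := Set.Infinite.exists_subset_card_eq hfin 3
    obtain ⟨δ, hδ, hsep⟩ := sep_finset (insert 0 P)
    have hPm : ∀ p ∈ P, p ∈ insert 0 P := fun p hp => by simp [hp]
    have hP0 : ∀ p ∈ P, (0 : ℝ) ≠ p := fun p hp => Ne.symm (hPS hp).2
    have hB0 : ∀ p ∈ P, rb δ hδ p 0 = 0 := fun p hp =>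
      rb_zero hδ (r := 0) (hsep 0 (by simp) p (hPm p hp) (hP0 p hp)) (by simpa using hδ)
    let A : ℝ → ℝ := fun p => ∫ x, deriv (rb δ hδ p) (u x) * ‖v x‖
    let B : ℝ → ℝ := fun p => ∫ x, SignType.sign (u x) * rb δ hδ p (u x)
    let L : (P → ℝ) →ₗ[ℝ] (ℝ × ℝ) := Fintype.linearCombination ℝ (fun p : P => (A p, B p))
    have hker : L.ker ≠ ⊥ := LinearMap.ker_ne_bot_of_finrank_lt (by
      simp [hPc])
    obtain ⟨c, hc, hc0⟩ := Submodule.exists_mem_ne_zero_of_ne_bot hker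
    have hLc : ∑ p : P, c p * A p = 0 ∧ ∑ p : P, c p * B p = 0 := by
      have : L c = 0 := hc
      simp only [L, Fintype.linearCombination_apply] at this
      have h1 := congrArg Prod.fst this
      have h2 := congrArg Prod.snd this
      simp only [Prod.fst_sum, Prod.snd_sum] at h1 h2
      exact ⟨by simpa using h1, by simpa using h2⟩
    obtain ⟨p, hcp⟩ := Function.ne_iff.1 hc0
    have hcp : c p ≠ 0 := hcp
    -- the unnormalised function
    let f : ℝ → ℝ := fun t => ∑ p : P, c p * rb δ hδ p t
    have hfC : ContDiff ℝ 1 f := by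
      apply ContDiff.sum
      intro p _
      exact contDiff_const.mul (ContDiffBump.contDiff _)
    have hfc : HasCompactSupport f := by
      have : f = ∑ p : P, fun t => c p * rb δ hδ p t := by
        ext t; simp [f]
      rw [this]
      refine Finset.sum_induction _ HasCompactSupport (fun _ _ ha hb => ha.add hb)
        (HasCompactSupport.zero) ?_
      intro p _
      exact (ContDiffBump.hasCompactSupport _).mul_left
    have hf0 : f 0 = 0 := Finset.sum_eq_zero fun p _ => by rw [hB0 p p.2, mul_zero]
    obtain ⟨C, hC, -, hb', hl⟩ := f_bounds hfC hfc hf0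
    have hderf : ∀ t, deriv f t = ∑ p : P, c p * deriv (rb δ hδ p) t := by
      intro t
      have : ∀ p : P, HasDerivAt (fun t => c p * rb δ hδ p t) (c p * deriv (rb δ hδ p) t) t :=
        fun p => (((rb δ hδ p).contDiff (n := 1)).differentiable one_ne_zero
          t).hasDerivAt.const_mul _
      exact (HasDerivAt.fun_sum fun p _ => this p).deriv
    have hder' : ∀ t, deriv (fun t => C⁻¹ * f t) t = C⁻¹ * deriv f t := by
      intro t; exact deriv_const_mul_field _
    have hbump : ∀ p ∈ P, MemW11 N (fun x => rb δ hδ p (u x))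
        (fun x => deriv (rb δ hδ p) (u x) • v x) := fun p hp =>
      h.comp (ContDiffBump.contDiff _) (ContDiffBump.hasCompactSupport _) (hB0 p hp)
    have i1 : ∀ p ∈ P, Integrable (fun x => deriv (rb δ hδ p) (u x) * ‖v x‖) := by
      intro p hp
      obtain ⟨C, hC, -, hb', hl⟩ := f_bounds ((rb δ hδ p).contDiff (n := 1))
        (rb δ hδ p).hasCompactSupport (hB0 p hp)
      exact h.2.1.norm.bdd_mul (c := C)
        ((((rb δ hδ p).contDiff (n := 1)).continuous_deriv le_rfl).comp_aestronglyMeasurable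
          h.1.1) (Eventually.of_forall fun x => hb' _)
    have hsm : Measurable (fun t : ℝ => ((SignType.sign t : SignType) : ℝ)) := by
      have : (fun t : ℝ => ((SignType.sign t : SignType) : ℝ)) = Real.sign := by
        ext t
        rcases lt_trichotomy t 0 with ht | ht | ht
        · simp [ht, Real.sign_of_neg]
        · simp [ht]
        · simp [ht, Real.sign_of_pos]
      rw [this]
      unfold Real.sign
      exact Measurable.ite measurableSet_Iio measurable_const
        (Measurable.ite measurableSet_Ioi measurable_const measurable_const)
    have i2 : ∀ p ∈ P, Integrable (fun x => (SignType.sign (u x) : ℝ) * rb δ hδ p (u x)) := by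
      intro p hp
      refine (hbump p hp).1.bdd_mul (c := 1) (hsm.comp_aemeasurable hum).aestronglyMeasurable
        (Eventually.of_forall fun x => ?_)
      rcases lt_trichotomy (u x) 0 with ht | ht | ht <;> simp [ht]
    refine ⟨fun t => C⁻¹ * f t, contDiff_const.mul hfC, hfc.mul_left, by simp [hf0], ?_, ?_, ?_,
      ?_, ?_⟩
    · intro t
      rw [hder', abs_mul, abs_of_pos (inv_pos.2 hC), inv_mul_le_iff₀ hC, mul_one]
      exact hb' t
    · intro t
      rw [abs_mul, abs_of_pos (inv_pos.2 hC), inv_mul_le_iff₀ hC]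
      exact hl t
    · simp only [hder', hderf, mul_assoc, Finset.sum_mul]
      rw [integral_const_mul, integral_finsetSum]
      · simp only [integral_const_mul]
        rw [show ∑ p : P, c p * ∫ x, deriv (rb δ hδ p) (u x) * ‖v x‖ = 0 from hLc.1, mul_zero]
      · intro p _
        exact (i1 p p.2).const_mul _
    · simp only [f, mul_left_comm _ C⁻¹, Finset.mul_sum]
      simp only [← Finset.mul_sum]
      rw [integral_const_mul]
      simp only [Finset.mul_sum, mul_left_comm _ (c _)]
      rw [integral_finsetSum]
      · simp only [integral_const_mul]
        rw [show ∑ p : P, c p * ∫ x, (SignType.sign (u x) : ℝ) * rb δ hδ p (u x) = 0 from hLc.2,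
          mul_zero]
      · intro p _
        exact (i2 p p.2).const_mul _
    · refine hpos p (hPS p.2) (δ / 4) (by positivity) (fun t => C⁻¹ * f t) (fun t ht => ?_)
      have : f t = c p := by
        simp only [f]
        rw [Finset.sum_eq_single p]
        · rw [rb_one hδ ht, mul_one]
        · intro r _ hr
          rw [rb_zero hδ (hsep p (hPm p p.2) r (hPm r r.2)
            (fun e => hr (Subtype.ext e.symm))) ht, mul_zero]
        · simp
      simp only [this]
      exact mul_ne_zero (inv_ne_zero hC.ne') hcp

lemma scaled (N : ℕ) (hN : 2 ≤ N) {q : ℝ} {m g : ℝ} (hm : 0 < m) (hg : 0 < g) :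
    ∃ (w : Euc N → ℝ) (z : Euc N → Euc N), MemW11 N w z ∧ (eLpNorm z 1 volume).toReal = g ∧
      nrm1 N w = m ∧ 0 < nrmq N q w ∨ q ≤ 0 := by
  by_cases hq : q ≤ 0
  · exact ⟨fun _ => 0, fun _ => 0, Or.inr hq⟩
  have hq : 0 < q := not_le.1 hq
  let ρ : ContDiffBump (0 : Euc N) := ⟨1, 2, one_pos, one_lt_two⟩
  have hρ : ContDiff ℝ 1 ρ := ρ.contDiff
  have hρc : HasCompactSupport ρ := ρ.hasCompactSupport
  have hρne : ¬ (ρ : Euc N → ℝ) =ᵐ[volume] 0 := by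
    intro h0
    have h1 := (Continuous.ae_eq_iff_eq volume hρ.continuous continuous_zero).1 h0
    have h2 : ρ 0 = 1 := ρ.one_of_mem_closedBall (by simp [ρ])
    rw [h1] at h2
    simp at h2
  have hW := memW11_of_contDiff hρ hρc
  set A := ∫ x, |ρ x| with hA
  set G := ∫ x, ‖gradient ρ x‖ with hG
  have hApos : 0 < A := by
    refine lt_of_le_of_ne (integral_nonneg fun x => abs_nonneg _) fun h0 => hρne ?_
    have := (integral_eq_zero_iff_of_nonneg (fun x => abs_nonneg (ρ x)) hW.1.abs).1 h0.symm
    filter_upwards [this] with x hx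
    exact abs_eq_zero.1 hx
  have hGpos : 0 < G := by
    refine lt_of_le_of_ne (integral_nonneg fun x => norm_nonneg _) fun h0 => hρne ?_
    have := (integral_eq_zero_iff_of_nonneg (fun x => norm_nonneg (gradient ρ x))
      hW.2.1.norm).1 h0.symm
    apply zero_grad N hN hW
    filter_upwards [this] with x hx
    exact norm_eq_zero.1 hx
  set l : ℝ := (g / G) / (m / A) with hl
  have hlpos : 0 < l := by positivity
  set c : ℝ := (m / A) * l ^ N with hc
  have hcpos : 0 < c := by positivity
  let w : Euc N → ℝ := fun x => c * ρ (l • x)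
  have hwC : ContDiff ℝ 1 w :=
    contDiff_const.mul (hρ.comp (contDiff_const_smul l))
  have hwc : HasCompactSupport w := by
    have : HasCompactSupport (fun x => ρ (l • x)) :=
      hρc.comp_homeomorph (Homeomorph.smulOfNeZero l hlpos.ne')
    exact this.mul_left
  have hgr : ∀ x, gradient w x = (c * l) • gradient ρ (l • x) := by
    intro x
    unfold gradient
    have h1 : HasFDerivAt (fun x : Euc N => l • x) (l • ContinuousLinearMap.id ℝ (Euc N)) x :=
      (hasFDerivAt_id x).const_smul l
    have h2 : HasFDerivAt w _ x :=
      (((hρ.differentiable one_ne_zero (l • x)).hasFDerivAt.comp x h1).const_mul c)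
    rw [h2.fderiv, ← map_smul]
    congr 1
    ext y
    simp [mul_assoc]
  have hWw := memW11_of_contDiff hwC hwc
  have hlN : |(l ^ N)⁻¹| = (l ^ N)⁻¹ := abs_of_pos (by positivity)
  have hm1 : nrm1 N w = m := by
    rw [nrm1_eq hWw.1]
    have : ∀ x, |w x| = c * |ρ (l • x)| := fun x => by
      simp only [w, abs_mul, abs_of_pos hcpos]
    simp only [this]
    rw [integral_const_mul, Measure.integral_comp_smul volume (fun x => |ρ x|) l]
    rw [finrank_euclideanSpace_fin, hlN, ← hA, smul_eq_mul, hc]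
    field_simp
  have hg1 : (eLpNorm (fun x => gradient w x) 1 volume).toReal = g := by
    rw [nrmv_eq hWw.2.1]
    have : ∀ x, ‖gradient w x‖ = (c * l) * ‖gradient ρ (l • x)‖ := fun x => by
      rw [hgr, norm_smul, Real.norm_of_nonneg (by positivity)]
    simp only [this]
    rw [integral_const_mul, Measure.integral_comp_smul volume (fun x => ‖gradient ρ x‖) l]
    rw [finrank_euclideanSpace_fin, hlN, ← hG, smul_eq_mul]
    have e : c * l * ((l ^ N)⁻¹ * G) = (m / A) * l * G := by
      rw [hc]; field_simp
    rw [e, hl]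
    field_simp
  refine ⟨w, fun x => gradient w x, Or.inl ⟨hWw, hg1, hm1, ?_⟩⟩
  unfold nrmq
  refine ENNReal.toReal_pos ?_ ?_
  · rw [Ne, eLpNorm_eq_zero_iff hWw.1.1 (by simpa using hq)]
    intro h0
    have : nrm1 N w = 0 := by
      unfold nrm1
      rw [(eLpNorm_eq_zero_iff hWw.1.1 one_ne_zero).2 h0]; rfl
    linarith
  · exact (hwC.continuous.memLp_of_hasCompactSupport hwc).2.ne

lemma sign_abs {x y : ℝ} (h : |y| ≤ |x|) :
    |x + y| = |x| + (SignType.sign x : ℝ) * y := by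
  rcases lt_trichotomy x 0 with hx | hx | hx
  · rw [abs_of_neg hx] at h ⊢
    have := (abs_le.1 h).2
    rw [abs_of_nonpos (by linarith)]
    simp [hx]; ring
  · subst hx
    simp at h
    simp [h]
  · rw [abs_of_pos hx] at h ⊢
    have := (abs_le.1 h).1
    rw [abs_of_nonneg (by linarith)]
    simp [hx]

lemma perturb {N : ℕ} {u : Euc N → ℝ} {v : Euc N → Euc N} (h : MemW11 N u v) {f : ℝ → ℝ}
    (hf : ContDiff ℝ 1 f) (hfc : HasCompactSupport f) (hf0 : f 0 = 0)
    (hd : ∀ t, |deriv f t| ≤ 1) (hl : ∀ t, |f t| ≤ |t|)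
    (h1 : ∫ x, deriv f (u x) * ‖v x‖ = 0) (h2 : ∫ x, SignType.sign (u x) * f (u x) = 0) :
    ∃ z, MemW11 N (fun x => u x + f (u x)) z ∧
      (eLpNorm z 1 volume).toReal = (eLpNorm v 1 volume).toReal ∧
      nrm1 N (fun x => u x + f (u x)) = nrm1 N u := by
  have hW := h.comp hf hfc hf0
  have hS := h.add hW
  refine ⟨_, hS, ?_, ?_⟩
  · rw [nrmv_eq hS.2.1, nrmv_eq h.2.1]
    have e : ∀ x, ‖v x + deriv f (u x) • v x‖ = ‖v x‖ + deriv f (u x) * ‖v x‖ := by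
      intro x
      have hnn : 0 ≤ 1 + deriv f (u x) := by linarith [(abs_le.1 (hd (u x))).1]
      have : v x + deriv f (u x) • v x = (1 + deriv f (u x)) • v x := by
        rw [add_smul, one_smul]
      rw [this, norm_smul, Real.norm_of_nonneg hnn]; ring
    have i : Integrable (fun x => deriv f (u x) * ‖v x‖) :=
      h.2.1.norm.bdd_mul (c := 1)
        ((hf.continuous_deriv le_rfl).comp_aestronglyMeasurable h.1.1)
        (Eventually.of_forall fun x => hd _)
    simp only [e]
    rw [integral_add h.2.1.norm i, h1, add_zero]
  · rw [nrm1_eq hS.1, nrm1_eq h.1]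
    have e : ∀ x, |u x + f (u x)| = |u x| + SignType.sign (u x) * f (u x) :=
      fun x => sign_abs (hl _)
    have i : Integrable (fun x => (SignType.sign (u x) : ℝ) * f (u x)) := by
      have : (fun x => (SignType.sign (u x) : ℝ) * f (u x)) =
          fun x => |u x + f (u x)| - |u x| := by
        ext x; rw [e]; ring
      rw [this]
      exact hS.1.abs.sub h.1.abs
    simp only [e]
    rw [integral_add h.1.abs i, h2, add_zero]

/-- the supremum `D̃_α` on `W^{1,1}(ℝ^N)` is never attained. -/
theorem DtildeAlpha_not_attained (N : ℕ) (hN : 2 ≤ N) (q : ℝ) (hq1 : 1 < q)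
    (hq2 : q ≤ (N : ℝ) / ((N : ℝ) - 1)) (α a b : ℝ) (hα : 0 < α) (ha : 0 < a)
    (hb : 0 < b) :
    ¬ ∃ u : Euc N → ℝ, ∃ v : Euc N → Euc N, MemW11 N u v ∧
        ((eLpNorm v 1 volume).toReal) ^ a + nrm1 N u ^ b = 1 ∧
        nrm1 N u + α * nrmq N q u ^ q =
          sSup { r | ∃ w : Euc N → ℝ, ∃ z : Euc N → Euc N, MemW11 N w z ∧
            ((eLpNorm z 1 volume).toReal) ^ a + nrm1 N w ^ b = 1 ∧
            r = nrm1 N w + α * nrmq N q w ^ q } := by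
  rintro ⟨u, v, h, hcon, hval⟩
  have hq0 : 0 < q := by linarith
  have hn0 : ∀ w : Euc N → ℝ, 0 ≤ nrmq N q w ^ q := fun w =>
    Real.rpow_nonneg ENNReal.toReal_nonneg _
  -- `u` and `v` are nontrivial
  have hu0 : ¬ u =ᵐ[volume] 0 := by
    intro hu
    have e1 : nrm1 N u = 0 := by
      unfold nrm1; rw [(eLpNorm_eq_zero_iff h.1.1 one_ne_zero).2 hu]; rfl
    have e2 : nrmq N q u = 0 := by
      unfold nrmq
      rw [(eLpNorm_eq_zero_iff h.1.1 (by simpa using hq0)).2 hu]; rfl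
    have hvz : v =ᵐ[volume] 0 := by
      have hvi : ∀ i, ∀ᵐ x, v x i = 0 := by
        intro i
        have hint : Integrable (fun x => v x i) :=
          (EuclideanSpace.proj (𝕜 := ℝ) i).integrable_comp h.2.1
        refine ae_eq_zero_of_integral_contDiff_smul_eq_zero hint.locallyIntegrable ?_
        intro ψ hψ hψc
        have h3 := h.2.2 ψ (hψ.of_le (by exact_mod_cast le_top)) hψc i
        have h4 : ∫ x, u x * fderiv ℝ ψ x (EuclideanSpace.single i 1) = 0 := by
          apply integral_eq_zero_of_ae
          filter_upwards [hu] with x hx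
          simp [hx]
        rw [h4] at h3
        simp only [smul_eq_mul, mul_comm (ψ _)]
        linarith
      filter_upwards [ae_all_iff.2 hvi] with x hx
      ext i
      simpa using hx i
    rw [(eLpNorm_eq_zero_iff h.2.1.1 one_ne_zero).2 hvz, e1] at hcon
    simp [Real.zero_rpow ha.ne', Real.zero_rpow hb.ne'] at hcon
  have hmpos : 0 < nrm1 N u := by
    unfold nrm1
    refine ENNReal.toReal_pos ?_ (memLp_one_iff_integrable.2 h.1).2.ne
    rw [Ne, eLpNorm_eq_zero_iff h.1.1 one_ne_zero]; exact hu0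
  have hgpos : 0 < (eLpNorm v 1 volume).toReal := by
    refine ENNReal.toReal_pos ?_ (memLp_one_iff_integrable.2 h.2.1).2.ne
    rw [Ne, eLpNorm_eq_zero_iff h.2.1.1 one_ne_zero]
    exact fun hv => hu0 (zero_grad N hN h hv)
  -- maximality
  have hmax : ∀ w z, MemW11 N w z → (eLpNorm z 1 volume).toReal = (eLpNorm v 1 volume).toReal →
      nrm1 N w = nrm1 N u → nrmq N q w ^ q ≤ nrmq N q u ^ q := by
    intro w z hw hz hw1
    by_cases hbdd : BddAbove { r | ∃ w : Euc N → ℝ, ∃ z : Euc N → Euc N, MemW11 N w z ∧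
            ((eLpNorm z 1 volume).toReal) ^ a + nrm1 N w ^ b = 1 ∧
            r = nrm1 N w + α * nrmq N q w ^ q }
    · have := le_csSup hbdd ⟨w, z, hw, by rw [hz, hw1]; exact hcon, rfl⟩
      rw [← hval, hw1] at this
      exact le_of_mul_le_mul_left (by linarith) hα
    · rw [Real.sSup_of_not_bddAbove hbdd] at hval
      have := mul_nonneg hα.le (hn0 u)
      linarith
  by_cases hLq : MemLp u (ENNReal.ofReal q) volume
  · obtain ⟨f, hf, hfc, hf0, hd, hl, h1, h2, hne⟩ := exists_f hN h hu0
    obtain ⟨z1, hz1, hz1g, hz1m⟩ := perturb h hf hfc hf0 hd hl h1 h2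
    have hdn : ∀ t, deriv (fun t => - f t) t = - deriv f t := fun t => deriv.fun_neg
    obtain ⟨z2, hz2, hz2g, hz2m⟩ := perturb h (f := fun t => - f t) hf.neg hfc.neg (by simp [hf0])
      (by simpa [hdn] using hd) (by simpa using hl)
      (by simp only [hdn, neg_mul, integral_neg, h1, neg_zero])
      (by simp only [mul_neg, integral_neg, h2, neg_zero])
    have hgm : AEStronglyMeasurable (fun x => f (u x)) volume :=
      hf.continuous.comp_aestronglyMeasurable h.1.1
    have hgL : MemLp (fun x => f (u x)) (ENNReal.ofReal q) volume :=
      hLq.mono hgm (Eventually.of_forall fun x => hl _)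
    have hstr := int_strict hq1 hLq hgm (fun x => hl _) hne
    have m1 := hmax _ _ hz1 hz1g hz1m
    have m2 := hmax _ _ hz2 hz2g hz2m
    rw [nrmq_eq hq1 hLq, nrmq_eq hq1 (u := fun x => u x + f (u x)) (hLq.add hgL)] at m1
    rw [nrmq_eq hq1 hLq, nrmq_eq hq1 (u := fun x => u x + -f (u x)) (hLq.add hgL.neg)] at m2
    simp only [← sub_eq_add_neg] at m1 m2
    linarith
  · have hzero : nrmq N q u = 0 := by
      unfold nrmq
      have : eLpNorm u (ENNReal.ofReal q) volume = ⊤ := by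
        by_contra hne
        exact hLq ⟨h.1.1, lt_top_iff_ne_top.2 hne⟩
      rw [this]; rfl
    obtain ⟨w, z, hwz⟩ := scaled N hN (q := q) hmpos hgpos
    rcases hwz with ⟨hw, hz, hwm, hpos⟩ | hq'
    · have := hmax w z hw hz hwm
      rw [hzero, Real.zero_rpow hq0.ne'] at this
      exact absurd this (not_le.2 (Real.rpow_pos_of_pos hpos q))
    · linarith
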